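/- Let f : V → V be a function and define the relation W on V by W u v := (f u = v ∨ f v = u). Suppose u and v are periodic points of f, i.e. there exist p > 0 with f^[p] u = u and q > 0 with f^[q] v = v, and suppose u and v lie in the same weakly connected component of the functional graph of f, i.e. Relation.ReflTransGen W u v holds. Then u and v lie on the same cycle: there exists a natural number k with f^[k] u = v. -/

import Mathlib

/-- Weakly connected vertices have forward orbits that meet. -/
theorem exists_iterate_eq_iterate_of_weaklyConnected {V : Type*} (f : V → V) (u v : V)
    (h : Relation.ReflTransGen (fun a b => f a = b ∨ f b = a) u v) :
    ∃ m n : ℕ, f^[m] u = f^[n] v := by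
  induction h with
  | refl => exact ⟨0, 0, rfl⟩
  | tail _ hbc ih =>
    obtain ⟨m, n, hmn⟩ := ih
    rcases hbc with rfl | rfl
    · refine ⟨m + 1, n, ?_⟩
      rw [Function.iterate_succ_apply', hmn, ← Function.iterate_succ_apply' f,
        Function.iterate_succ_apply]
    · exact ⟨m, n + 1, hmn⟩

/-- Two periodic points of `f` in the same weakly connected component of
the functional graph of `f` lie on the same cycle: some forward iterate of `u` is `v`. -/
theorem stmt_11 {V : Type*} (f : V → V) (u v : V)
    (hu : ∃ p : ℕ, 0 < p ∧ f^[p] u = u)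
    (hv : ∃ q : ℕ, 0 < q ∧ f^[q] v = v)
    (h : Relation.ReflTransGen (fun a b => f a = b ∨ f b = a) u v) :
    ∃ k : ℕ, f^[k] u = v := by
  obtain ⟨m, n, hmn⟩ := exists_iterate_eq_iterate_of_weaklyConnected f u v h
  obtain ⟨q, hq, hqv⟩ := hv
  -- The orbits of `u` and `v` meet at `f^[n] v`; since `n ≤ q * n`, iterating further
  -- reaches `f^[q * n] v`, which is `v` again by periodicity.
  refine ⟨q * n - n + m, ?_⟩
  rw [Function.iterate_add_apply, hmn, ← Function.iterate_add_apply,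
    Nat.sub_add_cancel (Nat.le_mul_of_pos_left n hq), Function.iterate_mul]
  exact Function.iterate_fixed hqv n
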